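/- A finitely presented group G is hyperbolic if and only if its isoperimetric spectrum is linear, i.e., f_{G,X}(k,m,n) ∼ n/m for some (equivalently, any) finite generating set X of G, where n/m is regarded as an element of 𝓕 independent of k. -/

import Mathlib

open Function

namespace IsoSpecPaper

variable {ι : Type*} {G : Type*} [Group G]

/-- The (reduced) length of an element of a free group. -/
noncomputable def wnorm (w : FreeGroup ι) : ℕ :=
  @FreeGroup.norm ι (Classical.decEq ι) w

/-- `triv φ k` : the set of words of length at most `k` in the generators
(and their inverses) representing the identity of `G` under the marking `φ`. -/
noncomputable def triv (φ : FreeGroup ι →* G) (k : ℕ) : Set (FreeGroup ι) :=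
  {w | wnorm w ≤ k ∧ φ w = 1}

/-- `AreaLe R w l` : `w` is a product of `l` conjugates of elements of `R` or
their inverses in the free group. -/
def AreaLe (R : Set (FreeGroup ι)) (w : FreeGroup ι) (l : ℕ) : Prop :=
  ∃ L : List (FreeGroup ι × FreeGroup ι), L.length = l ∧
    (∀ p ∈ L, p.2 ∈ R ∨ p.2⁻¹ ∈ R) ∧
    w = (L.map fun p => p.1⁻¹ * p.2 * p.1).prod

/-- The area of `w` with respect to the set of relators `R`. -/
noncomputable def area (R : Set (FreeGroup ι)) (w : FreeGroup ι) : ℕ :=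
  sInf {l | AreaLe R w l}

/-- The isoperimetric spectrum of the marked group `(G, φ)`:
`isoSpec φ k m n = max { area_{S_m}(w) : w ∈ ⟪S_k⟫, ‖w‖ ≤ n }`. -/
noncomputable def isoSpec (φ : FreeGroup ι →* G) (k m n : ℕ) : ℕ :=
  sSup (area (triv φ m) '' {w | w ∈ Subgroup.normalClosure (triv φ k) ∧ wnorm w ≤ n})

/-- The real-valued isoperimetric spectrum. -/
noncomputable def isoSpecR (φ : FreeGroup ι →* G) : ℕ → ℕ → ℕ → ℝ :=
  fun k m n => (isoSpec φ k m n : ℝ)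

/-- The Dehn function of the presentation with relators `R`. -/
noncomputable def dehn (R : Set (FreeGroup ι)) (n : ℕ) : ℕ :=
  sSup (area R '' {w | w ∈ Subgroup.normalClosure R ∧ wnorm w ≤ n})

/-- The quasi-order `f ≼ g` on functions of triples `(k,m,n)` of positive integers
with `m ≥ k`. -/
def SpecLE (f g : ℕ → ℕ → ℕ → ℝ) : Prop :=
  ∃ C : ℕ, 0 < C ∧ ∀ k m n : ℕ, 0 < k → 0 < m → 0 < n → C * k ≤ m →
    f k (C * m) n ≤ C * g (C * k) m (C * n) + C * (n : ℝ) / m + C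

/-- Equivalence of isoperimetric functions: `f ∼ g`. -/
def SpecEquiv (f g : ℕ → ℕ → ℕ → ℝ) : Prop := SpecLE f g ∧ SpecLE g f

/-- The linear spectrum `(k,m,n) ↦ n/m`. -/
noncomputable def linSpec : ℕ → ℕ → ℕ → ℝ := fun _ m n => (n : ℝ) / m

/-- The word length of `g ∈ G` with respect to the marking `φ`. -/
noncomputable def wlen (φ : FreeGroup ι →* G) (g : G) : ℕ :=
  sInf {n | ∃ w : FreeGroup ι, wnorm w = n ∧ φ w = g}

/-- The word metric on `G` with respect to the marking `φ`. -/
noncomputable def wdist (φ : FreeGroup ι →* G) (g h : G) : ℕ := wlen φ (g⁻¹ * h)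

/-- Quasi-isometry of marked groups with respect to their word metrics. -/
noncomputable def QuasiIsometric {H : Type*} [Group H] {κ : Type*}
    (φ : FreeGroup ι →* G) (ψ : FreeGroup κ →* H) : Prop :=
  ∃ L : ℝ, 0 ≤ L ∧ ∃ (α : G → H) (β : H → G),
    (∀ x y : G, (wdist ψ (α x) (α y) : ℝ) ≤ L * wdist φ x y + L) ∧
    (∀ u v : H, (wdist φ (β u) (β v) : ℝ) ≤ L * wdist ψ u v + L) ∧
    (∀ t : H, (wdist ψ (α (β t)) t : ℝ) ≤ L) ∧
    (∀ s : G, (wdist φ (β (α s)) s : ℝ) ≤ L)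

/-- A (combinatorial) geodesic path of length `n` in the Cayley graph of `(G, φ)`:
consecutive vertices are at distance at most `1` and the endpoints are at
distance exactly `n`. -/
noncomputable def IsGeodesic (φ : FreeGroup ι →* G) {n : ℕ} (p : Fin (n + 1) → G) : Prop :=
  (∀ i : Fin n, wdist φ (p i.castSucc) (p i.succ) ≤ 1) ∧
  wdist φ (p 0) (p (Fin.last n)) = n

/-- Every vertex of the path `p` lies within distance `δ` of the set `A`. -/
noncomputable def ThinAt (φ : FreeGroup ι →* G) (δ : ℝ) {n : ℕ}
    (p : Fin (n + 1) → G) (A : Set G) : Prop :=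
  ∀ i, ∃ a ∈ A, (wdist φ (p i) a : ℝ) ≤ δ

/-- The Cayley graph of `(G, φ)` is `δ`-hyperbolic: every geodesic triangle is `δ`-thin. -/
noncomputable def HypConst (φ : FreeGroup ι →* G) (δ : ℝ) : Prop :=
  ∀ (n₁ n₂ n₃ : ℕ) (p : Fin (n₁ + 1) → G) (q : Fin (n₂ + 1) → G) (r : Fin (n₃ + 1) → G),
    IsGeodesic φ p → IsGeodesic φ q → IsGeodesic φ r →
    p (Fin.last n₁) = q 0 → q (Fin.last n₂) = r 0 → r (Fin.last n₃) = p 0 →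
    ThinAt φ δ p (Set.range q ∪ Set.range r) ∧
    ThinAt φ δ q (Set.range r ∪ Set.range p) ∧
    ThinAt φ δ r (Set.range p ∪ Set.range q)

/-- The marked group `(G, φ)` is hyperbolic. -/
noncomputable def IsHyperbolic (φ : FreeGroup ι →* G) : Prop :=
  ∃ δ : ℝ, 0 ≤ δ ∧ HypConst φ δ

/-- `G` (marked by `φ`) is a limit (direct limit) of hyperbolic groups. -/
noncomputable def LimitOfHyperbolic (φ : FreeGroup ι →* G) : Prop :=
  Surjective φ ∧ ∃ R : ℕ → Set (FreeGroup ι),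
    (∀ i j, i ≤ j → R i ⊆ R j) ∧
    φ.ker = Subgroup.normalClosure (⋃ i, R i) ∧
    ∀ i, IsHyperbolic (QuotientGroup.mk' (Subgroup.normalClosure (R i)))

/-- `G` (marked by `φ`) is well-approximated by hyperbolic groups. -/
noncomputable def WellApproximated (φ : FreeGroup ι →* G) : Prop :=
  Surjective φ ∧ ∃ R : ℕ → Set (FreeGroup ι),
    (∀ i j, i ≤ j → R i ⊆ R j) ∧
    φ.ker = Subgroup.normalClosure (⋃ i, R i) ∧
    (∀ i, IsHyperbolic (QuotientGroup.mk' (Subgroup.normalClosure (R i)))) ∧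
    ∃ C : ℕ, 0 < C ∧ ∀ i : ℕ, 0 < i →
      (∀ w : FreeGroup ι, wnorm w ≤ i → φ w = 1 →
        w ∈ Subgroup.normalClosure (R i)) ∧
      HypConst (QuotientGroup.mk' (Subgroup.normalClosure (R i))) ((C * i : ℕ) : ℝ)

/-!
If geodesic triangles are thin, Gromov's four-point condition holds at every large scale `m`, and a
loop with no shortcut between points at distance at most `16m` along it would be a local geodesic,
hence a quasi-geodesic, so it could not close up. Dehn's algorithm with relators of length at most
`32m` therefore shortens a long word by `m` at the cost of one relator, which bounds the area of a
word of length `n` by `n / m + 1`.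

Conversely, a linear spectrum of a finitely presented group gives a linear isoperimetric inequality
for the relators of some bounded length. Integrating the cochain `u dv`, with `u` and `v` truncated
distances from two adjacent sides of a quadrilateral, turns it into a Besicovitch inequality: the
product of the distances between opposite sides is at most linear in the perimeter. Thinness is
then improved from `D + 1` to `D` as long as `D` is large: a point at distance more than `D` from
the other two sides of a triangle is the centre of a ball of radius `D + 1` around which the
geodesic through that point has a detour of length proportional to the radius, hence a quadrilateral
of perimeter proportional to `D` and of width proportional to `D` in both directions. The descent
starts with the perimeter as the thinness constant.
-/

section Geodesics

variable {V : Type*} {Γ : SimpleGraph V} {x y z v w : V}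

/-- A walk is geodesic if its length is the distance between its endpoints. -/
def IsGeodesicWalk (p : Γ.Walk x y) : Prop :=
  p.length = Γ.dist x y

theorem IsGeodesicWalk.reverse {p : Γ.Walk x y} (hp : IsGeodesicWalk p) :
    IsGeodesicWalk p.reverse := by
  rw [IsGeodesicWalk, SimpleGraph.Walk.length_reverse, hp, SimpleGraph.dist_comm]

theorem IsGeodesicWalk.of_isSubwalk {p : Γ.Walk x y} {q : Γ.Walk z w} (hp : IsGeodesicWalk p)
    (hq : q.IsSubwalk p) : IsGeodesicWalk q :=
  SimpleGraph.length_eq_dist_of_subwalk hp hq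

theorem IsGeodesicWalk.exists_append {p : Γ.Walk x y} (hp : IsGeodesicWalk p)
    (hv : v ∈ p.support) :
    ∃ (q : Γ.Walk x v) (r : Γ.Walk v y),
      IsGeodesicWalk q ∧ IsGeodesicWalk r ∧ p = q.append r := by
  obtain ⟨q, r, rfl⟩ := SimpleGraph.Walk.mem_support_iff_exists_append.1 hv
  exact ⟨q, r, hp.of_isSubwalk (q.isSubwalk_of_append_left rfl),
    hp.of_isSubwalk (q.isSubwalk_of_append_right rfl), rfl⟩

theorem IsGeodesicWalk.dist_add_dist {p : Γ.Walk x y} (hp : IsGeodesicWalk p)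
    (hv : v ∈ p.support) : Γ.dist x v + Γ.dist v y = Γ.dist x y := by
  obtain ⟨q, r, hq, hr, rfl⟩ := hp.exists_append hv
  rw [← hq, ← hr, ← hp, SimpleGraph.Walk.length_append]

theorem IsGeodesicWalk.dist_eq_add {p : Γ.Walk x y} {q : Γ.Walk y z}
    (h : IsGeodesicWalk (p.append q)) (hv : v ∈ p.support) (hw : w ∈ q.support) :
    Γ.dist v w = Γ.dist v y + Γ.dist y w := by
  obtain ⟨p₁, p₂, rfl⟩ := SimpleGraph.Walk.mem_support_iff_exists_append.1 hv
  obtain ⟨q₁, q₂, rfl⟩ := SimpleGraph.Walk.mem_support_iff_exists_append.1 hw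
  have hsub : (p₂.append q₁).IsSubwalk ((p₁.append p₂).append (q₁.append q₂)) :=
    ⟨p₁, q₂, by simp only [SimpleGraph.Walk.append_assoc]⟩
  refine ((h.of_isSubwalk hsub).dist_add_dist ?_).symm
  exact (SimpleGraph.Walk.mem_support_append_iff _ _).2 (Or.inl p₂.end_mem_support)

theorem exists_isGeodesicWalk (hΓ : Γ.Connected) (x y : V) :
    ∃ p : Γ.Walk x y, IsGeodesicWalk p :=
  hΓ.exists_walk_length_eq_dist x y

theorem IsGeodesicWalk.dist_add_dist_le (hΓ : Γ.Connected) {p : Γ.Walk x y}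
    (hp : IsGeodesicWalk p) {D : ℕ} (hw : w ∈ p.support) (hvw : Γ.dist v w ≤ D) :
    Γ.dist x v + Γ.dist v y ≤ Γ.dist x y + 2 * D := by
  have hxy := hp.dist_add_dist hw
  have hxv := hΓ.dist_triangle (u := x) (v := w) (w := v)
  have hvy := hΓ.dist_triangle (u := v) (v := w) (w := y)
  rw [Γ.dist_comm (u := w) (v := v)] at hxv
  omega

theorem IsGeodesicWalk.dist_add_dist_le_two_mul (hΓ : Γ.Connected) {p : Γ.Walk x y}
    (hp : IsGeodesicWalk p) (hv : v ∈ p.support) (w : V) :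
    Γ.dist w x + Γ.dist w y ≤ 2 * Γ.dist w v + Γ.dist x y := by
  have hxy := hp.dist_add_dist hv
  have hwx := hΓ.dist_triangle (u := w) (v := v) (w := x)
  have hwy := hΓ.dist_triangle (u := w) (v := v) (w := y)
  rw [Γ.dist_comm (u := v) (v := x)] at hwx
  omega

end Geodesics

section ThinTriangles

variable {V : Type*} {Γ : SimpleGraph V} {N D : ℕ}

/-- Geodesic triangles of perimeter at most `N` are `D`-thin. By symmetry it is enough to ask this
of the first side. -/
def ThinUpTo (Γ : SimpleGraph V) (N D : ℕ) : Prop :=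
  ∀ ⦃x y z : V⦄ (p : Γ.Walk x y) (q : Γ.Walk y z) (r : Γ.Walk z x),
    IsGeodesicWalk p → IsGeodesicWalk q → IsGeodesicWalk r →
    p.length + q.length + r.length ≤ N →
    ∀ v ∈ p.support, ∃ w, (w ∈ q.support ∨ w ∈ r.support) ∧ Γ.dist v w ≤ D

theorem thinUpTo_of_le (Γ : SimpleGraph V) (hND : N ≤ D) : ThinUpTo Γ N D := by
  intro x y z p q r hp _ _ hN v hv
  refine ⟨y, Or.inl q.start_mem_support, ?_⟩
  have hxy := hp.dist_add_dist hv
  rw [← hp] at hxy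
  omega

/-- Gromov's four-point condition, in its form for the three pairings of four points. -/
def FourPoint (Γ : SimpleGraph V) (δ : ℕ) : Prop :=
  ∀ w x y z : V, Γ.dist w y + Γ.dist x z ≤
    max (Γ.dist w x + Γ.dist y z) (Γ.dist w z + Γ.dist x y) + δ

theorem exists_near_both_sides (hΓ : Γ.Connected) (h : ∀ N, ThinUpTo Γ N D) {x y z : V}
    {p : Γ.Walk x y} {q : Γ.Walk y z} {r : Γ.Walk z x} (hp : IsGeodesicWalk p)
    (hq : IsGeodesicWalk q) (hr : IsGeodesicWalk r) :
    ∃ v ∈ p.support, (∃ a ∈ q.support, Γ.dist v a ≤ D + 1) ∧ ∃ b ∈ r.support, Γ.dist v b ≤ D := by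
  set S : Set V := {v | ∃ b ∈ r.support, Γ.dist v b ≤ D}
  have hx : x ∈ S := ⟨x, r.end_mem_support, by simp⟩
  by_cases hy : y ∈ S
  · exact ⟨y, p.end_mem_support, ⟨y, q.start_mem_support, by simp⟩, hy⟩
  obtain ⟨d, hd, hfst, hsnd⟩ := p.exists_boundary_dart S hx hy
  refine ⟨d.fst, p.dart_fst_mem_support_of_mem_darts hd, ?_, hfst⟩
  obtain ⟨a, ha | ha, hda⟩ :=
    h _ p q r hp hq hr le_rfl d.snd (p.dart_snd_mem_support_of_mem_darts hd)
  · have hstep : Γ.dist d.fst d.snd = 1 := SimpleGraph.dist_eq_one_iff_adj.2 d.adj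
    have htri := hΓ.dist_triangle (u := d.fst) (v := d.snd) (w := a)
    exact ⟨a, ha, by omega⟩
  · exact absurd ⟨a, ha, hda⟩ hsnd

theorem exists_two_mul_dist_le (hΓ : Γ.Connected) (h : ∀ N, ThinUpTo Γ N D) {x y : V}
    {p : Γ.Walk x y} (hp : IsGeodesicWalk p) (w : V) :
    ∃ v ∈ p.support, 2 * Γ.dist w v + Γ.dist x y ≤ Γ.dist w x + Γ.dist w y + (4 * D + 2) := by
  obtain ⟨q, hq⟩ := exists_isGeodesicWalk hΓ y w
  obtain ⟨r, hr⟩ := exists_isGeodesicWalk hΓ w x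
  obtain ⟨v, hv, ⟨a, ha, hva⟩, b, hb, hvb⟩ := exists_near_both_sides hΓ h hp hq hr
  have hyw := hq.dist_add_dist_le hΓ ha hva
  have hwx := hr.dist_add_dist_le hΓ hb hvb
  have hxy := hΓ.dist_triangle (u := x) (v := v) (w := y)
  simp only [Γ.dist_comm (u := x) (v := v), Γ.dist_comm (u := y), Γ.dist_comm (v := w)] at *
  exact ⟨v, hv, by omega⟩

theorem fourPoint_of_thin (hΓ : Γ.Connected) (h : ∀ N, ThinUpTo Γ N D) :
    FourPoint Γ (6 * D + 2) := by
  intro w x y z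
  obtain ⟨p, hp⟩ := exists_isGeodesicWalk hΓ x z
  obtain ⟨q, hq⟩ := exists_isGeodesicWalk hΓ z y
  obtain ⟨r, hr⟩ := exists_isGeodesicWalk hΓ y x
  obtain ⟨v, hv, hwv⟩ := exists_two_mul_dist_le hΓ h hp w
  obtain ⟨a, ha, hva⟩ := h _ p q r hp hq hr le_rfl v hv
  have hwa := hΓ.dist_triangle (u := w) (v := v) (w := a)
  rcases ha with ha | ha
  · have := hq.dist_add_dist_le_two_mul hΓ ha w
    rw [Γ.dist_comm (u := z) (v := y)] at this
    omega
  · have := hr.dist_add_dist_le_two_mul hΓ ha w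
    rw [Γ.dist_comm (u := y) (v := x)] at this
    omega

end ThinTriangles

section Shortcuts

variable {V : Type*} {Γ : SimpleGraph V} {m : ℕ}

theorem FourPoint.mono {δ : ℕ} (h : FourPoint Γ δ) (hm : δ ≤ m) : FourPoint Γ m :=
  fun w x y z => (h w x y z).trans (Nat.add_le_add_left hm _)

theorem FourPoint.dist_add_dist_succ_le (h : FourPoint Γ m) {x : ℕ → V} {N : ℕ}
    (hlow : ∀ i < N, 7 * m < Γ.dist (x i) (x (i + 1)))
    (hupp : ∀ i < N, Γ.dist (x i) (x (i + 1)) ≤ 8 * m)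
    (htwo : ∀ i, i + 1 < N → 15 * m < Γ.dist (x i) (x (i + 2))) {i : ℕ} (hi : i < N) :
    Γ.dist (x 0) (x i) + Γ.dist (x i) (x (i + 1)) ≤ Γ.dist (x 0) (x (i + 1)) + 2 * m := by
  induction i with
  | zero => simp
  | succ i ih =>
    have hprev := ih (by omega)
    have hlow_i := hlow i (by omega)
    have hupp_i := hupp i (by omega)
    have hupp_succ := hupp (i + 1) hi
    have htwo_i : 15 * m < Γ.dist (x i) (x (i + 1 + 1)) := htwo i hi
    have hfour := h (x (i + 1)) (x i) (x 0) (x (i + 1 + 1))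
    rw [Γ.dist_comm (u := x (i + 1)) (v := x i), Γ.dist_comm (u := x (i + 1)) (v := x 0),
      Γ.dist_comm (u := x i) (v := x 0)] at hfour
    omega

/-- Local geodesics are quasi-geodesics. -/
theorem FourPoint.mul_le_dist (h : FourPoint Γ m) {x : ℕ → V} {N : ℕ}
    (hlow : ∀ i < N, 7 * m < Γ.dist (x i) (x (i + 1)))
    (hupp : ∀ i < N, Γ.dist (x i) (x (i + 1)) ≤ 8 * m)
    (htwo : ∀ i, i + 1 < N → 15 * m < Γ.dist (x i) (x (i + 2))) :
    ∀ i ≤ N, i * (5 * m) ≤ Γ.dist (x 0) (x i) := by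
  intro i hi
  induction i with
  | zero => simp
  | succ i ih =>
    have hstep := h.dist_add_dist_succ_le hlow hupp htwo hi
    have hprev := ih (by omega)
    have hlow_i := hlow i hi
    rw [add_one_mul]
    omega

theorem dist_le_sub_of_dist_succ_le_one (hΓ : Γ.Connected) {y : ℕ → V}
    (hy : ∀ i, Γ.dist (y i) (y (i + 1)) ≤ 1) {i j : ℕ} (hij : i ≤ j) :
    Γ.dist (y i) (y j) ≤ j - i := by
  induction j, hij using Nat.le_induction with
  | base => simp
  | succ j hij ih =>
    have htri := hΓ.dist_triangle (u := y i) (v := y j) (w := y (j + 1))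
    have hstep := hy j
    omega

theorem exists_shortcut (hΓ : Γ.Connected) (h : FourPoint Γ m) {y : ℕ → V}
    (hy : ∀ i, Γ.dist (y i) (y (i + 1)) ≤ 1) {N : ℕ} (hloop : y N = y 0) (hN : 16 * m ≤ N) :
    ∃ i j, i ≤ j ∧ j ≤ N ∧ j - i ≤ 16 * m ∧ Γ.dist (y i) (y j) + m ≤ j - i := by
  by_contra! hno
  have hm : 0 < m := by simpa using hno 0 0
  have hlip {i j : ℕ} (hij : i ≤ j) := dist_le_sub_of_dist_succ_le_one hΓ hy hij
  set M := N / (8 * m)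
  have hM : M * (8 * m) ≤ N := Nat.div_mul_le_self _ _
  have hM' : N < M * (8 * m) + 8 * m := Nat.lt_div_mul_add (by omega)
  have hM2 : 2 ≤ M := (Nat.le_div_iff_mul_le (by omega)).2 (by omega)
  have hsample {i k : ℕ} (hk : k ≤ 2) (hi : i + k ≤ M) :
      k * (8 * m) < Γ.dist (y (i * (8 * m))) (y ((i + k) * (8 * m))) + m := by
    have hle : (i + k) * (8 * m) ≤ M * (8 * m) := Nat.mul_le_mul_right _ hi
    have hk' : k * (8 * m) ≤ 2 * (8 * m) := Nat.mul_le_mul_right _ hk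
    rw [add_mul] at hle ⊢
    have := hno (i * (8 * m)) (i * (8 * m) + k * (8 * m)) (by omega) (by omega) (by omega)
    omega
  have hgrow : M * (5 * m) ≤ Γ.dist (y (0 * (8 * m))) (y (M * (8 * m))) := by
    refine h.mul_le_dist (x := fun i => y (i * (8 * m))) (N := M) (fun i hi => ?_) (fun i _ => ?_)
      (fun i hi => ?_) M le_rfl
    · have := hsample (i := i) (k := 1) (by omega) hi
      omega
    · refine (hlip (Nat.mul_le_mul_right _ i.le_succ)).trans ?_
      rw [Nat.add_one_mul]
      omega
    · have := hsample (i := i) (k := 2) le_rfl hi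
      omega
  have hback := hlip hM
  rw [hloop, Γ.dist_comm] at hback
  rw [zero_mul] at hgrow
  have : 2 * (5 * m) ≤ M * (5 * m) := Nat.mul_le_mul_right _ hM2
  omega

end Shortcuts

section JoinedWithin

variable {V : Type*} {Γ : SimpleGraph V} {S T : Set V} {n k : ℕ} {x y z : V}

/-- `x` and `y` are joined by a walk of length at most `n` all of whose vertices lie in `S`. -/
def JoinedWithin (Γ : SimpleGraph V) (S : Set V) (n : ℕ) (x y : V) : Prop :=
  ∃ p : Γ.Walk x y, p.length ≤ n ∧ ∀ g ∈ p.support, g ∈ S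

theorem JoinedWithin.refl (hx : x ∈ S) : JoinedWithin Γ S n x x :=
  ⟨.nil, Nat.zero_le n, by simpa using hx⟩

theorem JoinedWithin.symm (h : JoinedWithin Γ S n x y) : JoinedWithin Γ S n y x := by
  obtain ⟨p, hn, hS⟩ := h
  exact ⟨p.reverse, by simpa using hn, by simpa using hS⟩

theorem JoinedWithin.trans (hxy : JoinedWithin Γ S n x y) (hyz : JoinedWithin Γ S k y z) :
    JoinedWithin Γ S (n + k) x z := by
  obtain ⟨p, hn, hpS⟩ := hxy
  obtain ⟨q, hk, hqS⟩ := hyz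
  refine ⟨p.append q, by simpa using add_le_add hn hk, fun g hg => ?_⟩
  exact ((SimpleGraph.Walk.mem_support_append_iff _ _).1 hg).elim (hpS g) (hqS g)

theorem JoinedWithin.mono (h : JoinedWithin Γ S n x y) (hST : S ⊆ T) (hnk : n ≤ k) :
    JoinedWithin Γ T k x y := by
  obtain ⟨p, hn, hS⟩ := h
  exact ⟨p, hn.trans hnk, fun g hg => hST (hS g hg)⟩

theorem IsGeodesicWalk.joinedWithin {p : Γ.Walk x y} (hp : IsGeodesicWalk p)
    (hS : ∀ g ∈ p.support, g ∈ S) {v w : V} (hv : v ∈ p.support) (hw : w ∈ p.support) :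
    JoinedWithin Γ S (Γ.dist v w) v w := by
  obtain ⟨p₁, p₂, hp₁, hp₂, rfl⟩ := hp.exists_append hv
  rcases (SimpleGraph.Walk.mem_support_append_iff _ _).1 hw with hw | hw
  · obtain ⟨q₁, q₂, -, hq₂, rfl⟩ := hp₁.exists_append hw
    rw [SimpleGraph.dist_comm]
    exact .symm ⟨q₂, hq₂.le, fun g hg => hS g (by simp [hg])⟩
  · obtain ⟨q₁, q₂, hq₁, -, rfl⟩ := hp₂.exists_append hw
    exact ⟨q₁, hq₁.le, fun g hg => hS g (by simp [hg])⟩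

theorem joinedWithin_compl_ball (hΓ : Γ.Connected) {c : V} {D n : ℕ} (hxy : Γ.dist x y ≤ n)
    (hx : D + n ≤ Γ.dist c x) : JoinedWithin Γ {g | D ≤ Γ.dist c g} n x y := by
  obtain ⟨p, hp⟩ := exists_isGeodesicWalk hΓ x y
  refine ⟨p, hp.le.trans hxy, fun g hg => ?_⟩
  have hxg := hp.dist_add_dist hg
  have hcx := hΓ.dist_triangle (u := c) (v := g) (w := x)
  rw [Γ.dist_comm (u := g)] at hcx
  change D ≤ Γ.dist c g
  omega

end JoinedWithin

section Detours

variable {V : Type*} {Γ : SimpleGraph V} {N D : ℕ} {o x y c : V}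

theorem joinedWithin_of_short_side (hΓ : Γ.Connected) {p : Γ.Walk o x} {q : Γ.Walk o y}
    (hp : IsGeodesicWalk p) (hq : IsGeodesicWalk q) {S : Set V} (hpS : ∀ g ∈ p.support, g ∈ S)
    (hqS : ∀ g ∈ q.support, g ∈ S) {n : ℕ} (hn : 2 * p.length + Γ.dist x y ≤ n) :
    JoinedWithin Γ S n x y := by
  have hxo := hp.joinedWithin hpS p.end_mem_support p.start_mem_support
  have hoy := hq.joinedWithin hqS q.start_mem_support q.end_mem_support
  have htri := hΓ.dist_triangle (u := o) (v := x) (w := y)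
  refine (hxo.trans hoy).mono subset_rfl ?_
  rw [Γ.dist_comm (u := x) (v := o)]
  rw [hp] at hn
  omega

/-- Go back along one side until the fellow-travelling jump to the other is safe. -/
theorem joinedWithin_of_thin (hΓ : Γ.Connected) (hD : 1 ≤ D) (hthin : ThinUpTo Γ N D)
    {p : Γ.Walk o x} {q : Γ.Walk o y} (hp : IsGeodesicWalk p) (hq : IsGeodesicWalk q)
    (hpc : ∀ g ∈ p.support, D ≤ Γ.dist c g) (hqc : ∀ g ∈ q.support, D ≤ Γ.dist c g)
    (hcx : Γ.dist c x ≤ 3 * D) (hxy : Γ.dist x y ≤ 6 * D)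
    (hN : p.length + q.length + Γ.dist x y ≤ N) :
    JoinedWithin Γ {g | D ≤ Γ.dist c g} (24 * D) x y := by
  by_cases hshort : p.length < 8 * D
  · exact joinedWithin_of_short_side hΓ hp hq hpc hqc (by omega)
  obtain ⟨r, hr⟩ := exists_isGeodesicWalk hΓ x y
  set v := p.getVert (p.length - 8 * D)
  have hv : v ∈ p.support := p.getVert_mem_support _
  have hvx : Γ.dist v x = 8 * D := by
    have hov : (p.take (p.length - 8 * D)).length = Γ.dist o v :=
      hp.of_isSubwalk (p.isSubwalk_take _)
    have hox := hp.dist_add_dist hv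
    rw [SimpleGraph.Walk.take_length] at hov
    rw [← hp] at hox
    omega
  obtain ⟨w, hw, hvw⟩ := hthin p r q.reverse hp hr hq.reverse
    (by rw [q.length_reverse, hr]; omega) v hv
  have hvr : w ∉ r.support := fun hwr => by
    have hwx := hr.dist_add_dist hwr
    have htri := hΓ.dist_triangle (u := v) (v := w) (w := x)
    rw [Γ.dist_comm (u := w) (v := x)] at htri
    omega
  have hwq : w ∈ q.support := by simpa using hw.resolve_left hvr
  have hcv : D + D ≤ Γ.dist c v := by
    have htri := hΓ.dist_triangle (u := v) (v := c) (w := x)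
    rw [Γ.dist_comm (u := v) (v := c)] at htri
    omega
  have hwy : Γ.dist w y ≤ 15 * D := by
    have h₁ := hΓ.dist_triangle (u := w) (v := v) (w := y)
    have h₂ := hΓ.dist_triangle (u := v) (v := x) (w := y)
    rw [Γ.dist_comm (u := w) (v := v)] at h₁
    omega
  have hxv := hp.joinedWithin hpc p.end_mem_support hv
  have hjump := joinedWithin_compl_ball hΓ hvw hcv
  have hback := hq.joinedWithin hqc hwq q.end_mem_support
  refine ((hxv.trans hjump).trans hback).mono subset_rfl ?_
  rw [Γ.dist_comm (u := x) (v := v)]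
  omega

theorem exists_escape (hΓ : Γ.Connected) {p : Γ.Walk c y} (hp : IsGeodesicWalk p) {T : Set V}
    (hy : y ∈ T) (hT : ∀ t ∈ T, D ≤ Γ.dist c t)
    (hnear : ∀ v ∈ p.support, ∃ t ∈ T, Γ.dist v t ≤ D) :
    ∃ n ≤ 2 * D, ∃ t ∈ T, Γ.dist c t ≤ 3 * D ∧
      JoinedWithin Γ {g | D ≤ Γ.dist c g} D (p.getVert n) t := by
  by_cases hshort : p.length ≤ 2 * D
  · refine ⟨p.length, hshort, y, hy, by rw [← hp]; omega, ?_⟩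
    rw [p.getVert_length]
    exact .refl (hT y hy)
  obtain ⟨t, ht, hvt⟩ := hnear (p.getVert (2 * D)) (p.getVert_mem_support _)
  have hcv : (p.take (2 * D)).length = Γ.dist c (p.getVert (2 * D)) :=
    hp.of_isSubwalk (p.isSubwalk_take _)
  have htri := hΓ.dist_triangle (u := c) (v := p.getVert (2 * D)) (w := t)
  rw [SimpleGraph.Walk.take_length] at hcv
  exact ⟨2 * D, le_rfl, t, ht, by omega, joinedWithin_compl_ball hΓ hvt (by omega)⟩

end Detours

section Rectangles

variable {V : Type*} {Γ : SimpleGraph V} {N D K : ℕ} {x y z c : V}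

/-- Besicovitch's inequality for quadrilaterals: the product of the distances between opposite
sides is at most linear in the perimeter. -/
def BesicovitchBound (Γ : SimpleGraph V) (K : ℕ) : Prop :=
  ∀ ⦃x₁ x₂ x₃ x₄ : V⦄ (p₁ : Γ.Walk x₁ x₂) (p₂ : Γ.Walk x₂ x₃) (p₃ : Γ.Walk x₃ x₄)
    (p₄ : Γ.Walk x₄ x₁) (d₁ d₂ : ℕ),
    (∀ s ∈ p₁.support, ∀ t ∈ p₃.support, d₁ ≤ Γ.dist s t) →
    (∀ s ∈ p₂.support, ∀ t ∈ p₄.support, d₂ ≤ Γ.dist s t) →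
    d₁ * d₂ ≤ K * (p₁.length + p₂.length + p₃.length + p₄.length + 1)

theorem IsGeodesicWalk.take_append_take {a : Γ.Walk c x} {b : Γ.Walk c y}
    (h : IsGeodesicWalk (a.reverse.append b)) (i j : ℕ) :
    IsGeodesicWalk ((a.take i).reverse.append (b.take j)) := by
  refine h.of_isSubwalk ⟨(a.drop i).reverse, b.drop j, ?_⟩
  rw [SimpleGraph.Walk.append_assoc, ← SimpleGraph.Walk.reverse_append, a.append_take_drop_eq,
    ← SimpleGraph.Walk.append_assoc, b.append_take_drop_eq]

theorem IsGeodesicWalk.dist_le_of_mem_take {p : Γ.Walk c x} (hp : IsGeodesicWalk p) {n : ℕ}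
    {v : V} (hv : v ∈ (p.take n).support) : Γ.dist c v ≤ n := by
  have htake := hp.of_isSubwalk (p.isSubwalk_take n)
  have hdist := htake.dist_add_dist hv
  rw [← htake, SimpleGraph.Walk.take_length] at hdist
  omega

theorem IsGeodesicWalk.le_dist_of_mem_drop {p : Γ.Walk c x} (hp : IsGeodesicWalk p) {n : ℕ}
    (hn : n ≤ p.length) {v : V} (hv : v ∈ (p.drop n).support) : n ≤ Γ.dist c v := by
  have htake := hp.of_isSubwalk (p.isSubwalk_take n)
  rw [← p.append_take_drop_eq n] at hp
  have hdist := hp.dist_eq_add (SimpleGraph.Walk.start_mem_support _) hv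
  rw [← htake, SimpleGraph.Walk.take_length] at hdist
  omega

theorem IsGeodesicWalk.left_of_reverse_append {a : Γ.Walk c x} {b : Γ.Walk c y}
    (h : IsGeodesicWalk (a.reverse.append b)) : IsGeodesicWalk a := by
  simpa using (h.of_isSubwalk (a.reverse.isSubwalk_of_append_left rfl)).reverse

theorem IsGeodesicWalk.right_of_reverse_append {a : Γ.Walk c x} {b : Γ.Walk c y}
    (h : IsGeodesicWalk (a.reverse.append b)) : IsGeodesicWalk b :=
  h.of_isSubwalk (a.reverse.isSubwalk_of_append_right rfl)

theorem IsGeodesicWalk.two_mul_le_dist_of_mem_drop {a : Γ.Walk c x} {b : Γ.Walk c y}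
    (h : IsGeodesicWalk (a.reverse.append b)) {n : ℕ} (ha : n ≤ a.length) (hb : n ≤ b.length)
    {v w : V} (hv : v ∈ (b.drop n).support) (hw : w ∈ (a.drop n).support) :
    2 * n ≤ Γ.dist v w := by
  have hcv := h.right_of_reverse_append.le_dist_of_mem_drop hb hv
  have hcw := h.left_of_reverse_append.le_dist_of_mem_drop ha hw
  have hwv := h.dist_eq_add (by simpa using (a.isSubwalk_drop n).support_subset hw)
    ((b.isSubwalk_drop n).support_subset hv)
  rw [Γ.dist_comm (u := w) (v := c), Γ.dist_comm (u := w) (v := v)] at hwv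
  omega

/-- Cut the geodesic at distance `D / 2` on both sides of `c` to see a fat quadrilateral. -/
theorem BesicovitchBound.radius_le (hΓ : Γ.Connected) (hK : BesicovitchBound Γ K)
    {a : Γ.Walk c x} {b : Γ.Walk c y} (hab : IsGeodesicWalk (a.reverse.append b))
    (ha : a.length ≤ 2 * D) (hb : b.length ≤ 2 * D)
    (hdetour : JoinedWithin Γ {g | D ≤ Γ.dist c g} (26 * D) y x) : D ≤ 91 * K + 1 := by
  have hag := hab.left_of_reverse_append
  have hbg := hab.right_of_reverse_append
  obtain ⟨p, hplen, hp⟩ := hdetour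
  have hDa : D ≤ a.length := hag.symm ▸ hp x p.end_mem_support
  have hDb : D ≤ b.length := hbg.symm ▸ hp y p.start_mem_support
  by_cases hD : D ≤ 1
  · omega
  obtain ⟨h, hh⟩ : ∃ h, h = D / 2 := ⟨_, rfl⟩
  have hfat₁ : ∀ s ∈ ((a.take h).reverse.append (b.take h)).support, ∀ t ∈ p.support,
      D - h ≤ Γ.dist s t := by
    intro s hs t ht
    have hcs : Γ.dist c s ≤ h := by
      rw [SimpleGraph.Walk.mem_support_append_iff, SimpleGraph.Walk.support_reverse,
        List.mem_reverse] at hs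
      exact hs.elim hag.dist_le_of_mem_take hbg.dist_le_of_mem_take
    have hct : D ≤ Γ.dist c t := hp t ht
    have htri := hΓ.dist_triangle (u := c) (v := s) (w := t)
    omega
  have hfat₂ : ∀ s ∈ (b.drop h).support, ∀ t ∈ (a.drop h).reverse.support,
      2 * h ≤ Γ.dist s t := by
    intro s hs t ht
    rw [SimpleGraph.Walk.support_reverse, List.mem_reverse] at ht
    exact hab.two_mul_le_dist_of_mem_drop (by omega) (by omega) hs ht
  have harea := hK _ (b.drop h) p (a.drop h).reverse (D - h) (2 * h) hfat₁ hfat₂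
  simp only [SimpleGraph.Walk.length_append, SimpleGraph.Walk.length_reverse,
    SimpleGraph.Walk.take_length, SimpleGraph.Walk.drop_length] at harea
  have hbound : h * (2 * h) ≤ h * (91 * K) := calc
    h * (2 * h) ≤ (D - h) * (2 * h) := Nat.mul_le_mul_right _ (by omega)
    _ ≤ K * (91 * h) := harea.trans (Nat.mul_le_mul_left K (by omega))
    _ = h * (91 * K) := by ring
  have := Nat.le_of_mul_le_mul_left hbound (by omega)
  omega

theorem joinedWithin_of_mem_adjacent_sides (hΓ : Γ.Connected) (hD : 1 ≤ D) (hthin : ThinUpTo Γ N D)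
    {p : Γ.Walk x y} {q : Γ.Walk y z} {r : Γ.Walk z x} (hp : IsGeodesicWalk p)
    (hq : IsGeodesicWalk q) (hr : IsGeodesicWalk r) (hN : p.length + q.length + r.length ≤ N)
    (hqc : ∀ g ∈ q.support, D ≤ Γ.dist c g) (hrc : ∀ g ∈ r.support, D ≤ Γ.dist c g)
    {s t : V} (hs : s ∈ q.support) (ht : t ∈ r.support) (hcs : Γ.dist c s ≤ 3 * D)
    (hst : Γ.dist s t ≤ 6 * D) :
    JoinedWithin Γ {g | D ≤ Γ.dist c g} (24 * D) s t := by
  obtain ⟨q₁, q₂, hq₁, hq₂, rfl⟩ := hq.exists_append hs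
  obtain ⟨r₁, r₂, hr₁, hr₂, rfl⟩ := hr.exists_append ht
  refine joinedWithin_of_thin hΓ hD hthin hq₂.reverse hr₁ (fun g hg => hqc g ?_)
    (fun g hg => hrc g ?_) hcs hst ?_
  · exact (q₁.isSubwalk_of_append_right rfl).support_subset (by simpa using hg)
  · exact (r₁.isSubwalk_of_append_left rfl).support_subset hg
  · have h₁ := hΓ.dist_triangle (u := s) (v := y) (w := t)
    have h₂ := hΓ.dist_triangle (u := y) (v := x) (w := t)
    rw [Γ.dist_comm (u := s) (v := y), ← hq₁] at h₁
    rw [Γ.dist_comm (u := y) (v := x), Γ.dist_comm (u := x) (v := t), ← hp, ← hr₂] at h₂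
    simp only [SimpleGraph.Walk.length_append, SimpleGraph.Walk.length_reverse] at hN ⊢
    omega

theorem joinedWithin_of_mem_sides (hΓ : Γ.Connected) (hD : 1 ≤ D) (hthin : ThinUpTo Γ N D)
    {p : Γ.Walk x y} {q : Γ.Walk y z} {r : Γ.Walk z x} (hp : IsGeodesicWalk p)
    (hq : IsGeodesicWalk q) (hr : IsGeodesicWalk r) (hN : p.length + q.length + r.length ≤ N)
    (hfar : ∀ g, g ∈ q.support ∨ g ∈ r.support → D ≤ Γ.dist c g)
    {s t : V} (hs : s ∈ q.support ∨ s ∈ r.support) (ht : t ∈ q.support ∨ t ∈ r.support)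
    (hcs : Γ.dist c s ≤ 3 * D) (hct : Γ.dist c t ≤ 3 * D) :
    JoinedWithin Γ {g | D ≤ Γ.dist c g} (24 * D) s t := by
  have hqc : ∀ g ∈ q.support, D ≤ Γ.dist c g := fun g hg => hfar g (Or.inl hg)
  have hrc : ∀ g ∈ r.support, D ≤ Γ.dist c g := fun g hg => hfar g (Or.inr hg)
  have hst := hΓ.dist_triangle (u := s) (v := c) (w := t)
  rw [Γ.dist_comm (u := s) (v := c)] at hst
  rcases hs with hs | hs <;> rcases ht with ht | ht
  · exact (hq.joinedWithin hqc hs ht).mono subset_rfl (by omega)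
  · exact joinedWithin_of_mem_adjacent_sides hΓ hD hthin hp hq hr hN hqc hrc hs ht hcs (by omega)
  · rw [Γ.dist_comm] at hst
    exact (joinedWithin_of_mem_adjacent_sides hΓ hD hthin hp hq hr hN hqc hrc ht hs hct
      (by omega)).symm
  · exact (hr.joinedWithin hrc hs ht).mono subset_rfl (by omega)

theorem ThinUpTo.of_succ (hΓ : Γ.Connected) (hK : BesicovitchBound Γ K) (hD : 91 * K + 1 ≤ D)
    (hthin : ThinUpTo Γ N (D + 1)) : ThinUpTo Γ N D := by
  intro x y z p q r hp hq hr hN c hc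
  by_contra! hfar
  set T : Set V := {t | t ∈ q.support ∨ t ∈ r.support}
  have hT : ∀ t ∈ T, D + 1 ≤ Γ.dist c t := hfar
  have hnear : ∀ v ∈ p.support, ∃ t ∈ T, Γ.dist v t ≤ D + 1 := hthin p q r hp hq hr hN
  obtain ⟨a, b, ha, hb, rfl⟩ := hp.exists_append hc
  obtain ⟨i, hi, s, hs, hcs, hs'⟩ := exists_escape hΓ ha.reverse (Or.inr r.end_mem_support) hT
    fun v hv => hnear v ((a.isSubwalk_of_append_left rfl).support_subset (by simpa using hv))
  obtain ⟨j, hj, t, ht, hct, ht'⟩ := exists_escape hΓ hb (Or.inl q.start_mem_support) hT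
    fun v hv => hnear v ((a.isSubwalk_of_append_right rfl).support_subset hv)
  have hdetour := joinedWithin_of_mem_sides hΓ (by omega) hthin hp hq hr hN hT ht hs hct hcs
  have hp' : IsGeodesicWalk (a.reverse.reverse.append b) := by rwa [a.reverse_reverse]
  have hradius := hK.radius_le hΓ (D := D + 1) (hp'.take_append_take i j)
    (by rw [SimpleGraph.Walk.take_length]; omega) (by rw [SimpleGraph.Walk.take_length]; omega)
    (((ht'.trans hdetour).trans hs'.symm).mono subset_rfl (by omega))
  omega

theorem thinUpTo_of_besicovitchBound (hΓ : Γ.Connected) (hK : BesicovitchBound Γ K) (N : ℕ) :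
    ThinUpTo Γ N (91 * K + 1) :=
  Nat.decreasingInduction' (P := ThinUpTo Γ N) (fun _ _ hD => ThinUpTo.of_succ hΓ hK hD)
    (Nat.le_add_left _ N) (thinUpTo_of_le Γ (Nat.le_add_right N _))

end Rectangles

section Words

variable {φ : FreeGroup ι →* G}

theorem wnorm_one : wnorm (1 : FreeGroup ι) = 0 :=
  @FreeGroup.norm_one ι (Classical.decEq ι)

theorem wnorm_inv (w : FreeGroup ι) : wnorm w⁻¹ = wnorm w :=
  @FreeGroup.norm_inv_eq ι (Classical.decEq ι) w

theorem wnorm_mul_le (v w : FreeGroup ι) : wnorm (v * w) ≤ wnorm v + wnorm w :=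
  @FreeGroup.norm_mul_le ι (Classical.decEq ι) v w

theorem wnorm_mk_le (L : List (ι × Bool)) : wnorm (FreeGroup.mk L) ≤ L.length :=
  @FreeGroup.norm_mk_le ι L (Classical.decEq ι)

theorem exists_mk_eq_length_eq_wnorm (w : FreeGroup ι) :
    ∃ L : List (ι × Bool), FreeGroup.mk L = w ∧ L.length = wnorm w :=
  ⟨@FreeGroup.toWord ι (Classical.decEq ι) w, @FreeGroup.mk_toWord ι (Classical.decEq ι) w, rfl⟩

theorem finite_setOf_wnorm_le [Finite ι] (n : ℕ) : {w : FreeGroup ι | wnorm w ≤ n}.Finite := by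
  refine ((List.finite_length_le (ι × Bool) n).image FreeGroup.mk).subset fun w hw => ?_
  obtain ⟨L, rfl, hL⟩ := exists_mk_eq_length_eq_wnorm w
  exact ⟨L, hL.trans_le hw, rfl⟩

theorem wdist_mul_le (g : G) (w : FreeGroup ι) : wdist φ g (g * φ w) ≤ wnorm w := by
  rw [wdist, inv_mul_cancel_left]
  exact Nat.sInf_le ⟨w, rfl, rfl⟩

theorem exists_mul_eq_wnorm_eq_wdist (hφ : Surjective φ) (g h : G) :
    ∃ w, g * φ w = h ∧ wnorm w = wdist φ g h := by
  obtain ⟨w, hw⟩ := hφ (g⁻¹ * h)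
  obtain ⟨v, hv, hv'⟩ := Nat.sInf_mem (s := {n | ∃ w, wnorm w = n ∧ φ w = g⁻¹ * h}) ⟨_, w, rfl, hw⟩
  exact ⟨v, by rw [hv', mul_inv_cancel_left], hv⟩

/-- The Cayley graph of `(G, φ)`. Trivial generators give no loops. -/
def cayleyGraph (φ : FreeGroup ι →* G) : SimpleGraph G :=
  SimpleGraph.mulCayley (Set.range fun i => φ (FreeGroup.of i))

theorem cayleyGraph_adj_iff {g h : G} :
    (cayleyGraph φ).Adj g h ↔ g ≠ h ∧ ∃ s : ι × Bool, g * φ (FreeGroup.mk [s]) = h := by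
  have hinv (i : ι) : FreeGroup.mk [(i, false)] = (FreeGroup.of i)⁻¹ := rfl
  have hof (i : ι) : FreeGroup.mk [(i, true)] = FreeGroup.of i := rfl
  simp only [cayleyGraph, SimpleGraph.mulCayley_adj', Set.exists_range_iff, Prod.exists,
    Bool.exists_bool, hinv, hof, map_inv, mul_inv_eq_iff_eq_mul, or_comm]

/-- The vertex reached after `i` letters when the word `L` is read in the Cayley graph from `g`. -/
def wordVertex (φ : FreeGroup ι →* G) (g : G) (L : List (ι × Bool)) (i : ℕ) : G :=
  g * φ (FreeGroup.mk (L.take i))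

theorem wordVertex_zero (g : G) (L : List (ι × Bool)) : wordVertex φ g L 0 = g := by
  rw [wordVertex, List.take_zero, ← FreeGroup.one_eq_mk, map_one, mul_one]

theorem wordVertex_length (g : G) (L : List (ι × Bool)) :
    wordVertex φ g L L.length = g * φ (FreeGroup.mk L) := by
  rw [wordVertex, List.take_length]

theorem wordVertex_append_of_le (g : G) {L : List (ι × Bool)} (M : List (ι × Bool)) {i : ℕ}
    (hi : i ≤ L.length) : wordVertex φ g (L ++ M) i = wordVertex φ g L i := by
  rw [wordVertex, List.take_append_of_le_length hi, wordVertex]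

theorem wordVertex_append_length_add (g : G) (L M : List (ι × Bool)) (i : ℕ) :
    wordVertex φ g (L ++ M) (L.length + i) = wordVertex φ (g * φ (FreeGroup.mk L)) M i := by
  rw [wordVertex, List.take_length_add_append, ← FreeGroup.mul_mk, map_mul, ← mul_assoc, wordVertex]

theorem wordVertex_succ (g : G) {L : List (ι × Bool)} {i : ℕ} (hi : i < L.length) :
    wordVertex φ g L (i + 1) = wordVertex φ g L i * φ (FreeGroup.mk [L[i]]) := by
  rw [wordVertex, wordVertex, ← List.take_concat_get' L i hi, ← FreeGroup.mul_mk, map_mul,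
    mul_assoc]

theorem wordVertex_succ_eq_or_adj (g : G) (L : List (ι × Bool)) (i : ℕ) :
    wordVertex φ g L (i + 1) = wordVertex φ g L i ∨
      (cayleyGraph φ).Adj (wordVertex φ g L i) (wordVertex φ g L (i + 1)) := by
  rcases lt_or_ge i L.length with hi | hi
  · exact or_iff_not_imp_left.2 fun hne =>
      cayleyGraph_adj_iff.2 ⟨Ne.symm hne, L[i], (wordVertex_succ g hi).symm⟩
  · left
    rw [wordVertex, wordVertex, List.take_of_length_le hi, List.take_of_length_le (by omega)]

theorem dist_wordVertex_succ_le_one (g : G) (L : List (ι × Bool)) (i : ℕ) :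
    (cayleyGraph φ).dist (wordVertex φ g L i) (wordVertex φ g L (i + 1)) ≤ 1 := by
  rcases wordVertex_succ_eq_or_adj (φ := φ) g L i with heq | hadj
  · simp [heq]
  · exact (SimpleGraph.dist_eq_one_iff_adj.2 hadj).le

theorem exists_walk_of_succ_eq_or_adj {V : Type*} {Γ : SimpleGraph V} {y : ℕ → V} {n : ℕ}
    (hy : ∀ i < n, y (i + 1) = y i ∨ Γ.Adj (y i) (y (i + 1))) :
    ∃ p : Γ.Walk (y 0) (y n), p.length ≤ n ∧ ∀ v, v ∈ p.support ↔ ∃ i ≤ n, y i = v := by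
  induction n with
  | zero => exact ⟨.nil, le_rfl, fun v => by simp [eq_comm]⟩
  | succ n ih =>
    obtain ⟨p, hlen, hsupp⟩ := ih fun i hi => hy i (by omega)
    rcases hy n n.lt_succ_self with heq | hadj
    · refine ⟨p.copy rfl heq.symm, by simpa using hlen.trans n.le_succ, fun v => ?_⟩
      rw [SimpleGraph.Walk.support_copy, hsupp]
      simp only [Nat.le_succ_iff, or_and_right, exists_or, exists_eq_left, heq]
      exact ⟨Or.inl, fun h => h.elim id fun h => ⟨n, le_rfl, h⟩⟩
    · refine ⟨p.concat hadj, by simpa using hlen, fun v => ?_⟩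
      simp only [SimpleGraph.Walk.support_concat, List.mem_append, hsupp, List.mem_singleton,
        Nat.le_succ_iff, or_and_right, exists_or, exists_eq_left, eq_comm]

theorem exists_wordVertex_eq_getVert {g h : G} (p : (cayleyGraph φ).Walk g h) :
    ∃ L : List (ι × Bool), L.length = p.length ∧ ∀ i, wordVertex φ g L i = p.getVert i := by
  induction p with
  | nil => exact ⟨[], rfl, fun i => by simp [wordVertex, ← FreeGroup.one_eq_mk]⟩
  | cons hadj p ih =>
    obtain ⟨L, hlen, hL⟩ := ih
    obtain ⟨-, s, rfl⟩ := cayleyGraph_adj_iff.1 hadj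
    refine ⟨s :: L, by simpa using hlen, fun i => ?_⟩
    cases i with
    | zero => rw [wordVertex_zero, SimpleGraph.Walk.getVert_zero]
    | succ i =>
      rw [SimpleGraph.Walk.getVert_cons_succ, ← hL, ← List.singleton_append, Nat.add_comm]
      exact wordVertex_append_length_add _ [s] L i

theorem exists_walk_length_le_wnorm (g : G) (w : FreeGroup ι) :
    ∃ p : (cayleyGraph φ).Walk g (g * φ w), p.length ≤ wnorm w := by
  obtain ⟨L, rfl, hL⟩ := exists_mk_eq_length_eq_wnorm w
  obtain ⟨p, hp, -⟩ := exists_walk_of_succ_eq_or_adj (n := L.length)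
    fun i _ => wordVertex_succ_eq_or_adj (φ := φ) g L i
  exact ⟨p.copy (wordVertex_zero g L) (wordVertex_length g L),
    by rw [SimpleGraph.Walk.length_copy]; exact hp.trans hL.le⟩

theorem cayleyGraph_connected (hφ : Surjective φ) : (cayleyGraph φ).Connected := by
  refine (SimpleGraph.connected_iff _).2 ⟨fun g h => ?_, ⟨1⟩⟩
  obtain ⟨w, rfl, -⟩ := exists_mul_eq_wnorm_eq_wdist hφ g h
  exact (exists_walk_length_le_wnorm g w).choose.reachable

theorem dist_cayleyGraph (hφ : Surjective φ) (g h : G) :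
    (cayleyGraph φ).dist g h = wdist φ g h := by
  apply le_antisymm
  · obtain ⟨w, rfl, hw⟩ := exists_mul_eq_wnorm_eq_wdist hφ g h
    obtain ⟨p, hp⟩ := exists_walk_length_le_wnorm (φ := φ) g w
    exact (SimpleGraph.dist_le p).trans (hp.trans hw.le)
  · obtain ⟨p, hp⟩ := (cayleyGraph_connected hφ).exists_walk_length_eq_dist g h
    obtain ⟨L, hlen, hL⟩ := exists_wordVertex_eq_getVert p
    have hend : g * φ (FreeGroup.mk L) = h := by
      rw [← wordVertex_length, hL, hlen, p.getVert_length]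
    calc wdist φ g h ≤ wnorm (FreeGroup.mk L) := hend ▸ wdist_mul_le g _
      _ ≤ (cayleyGraph φ).dist g h := (wnorm_mk_le L).trans (hlen.trans hp).le

end Words

section Hyperbolicity

variable {φ : FreeGroup ι →* G}

theorem eq_or_adj_of_wdist_le_one (hφ : Surjective φ) {g h : G} (hgh : wdist φ g h ≤ 1) :
    h = g ∨ (cayleyGraph φ).Adj g h := by
  rw [← dist_cayleyGraph hφ, Nat.le_one_iff_eq_zero_or_eq_one,
    (cayleyGraph_connected hφ).dist_eq_zero_iff, SimpleGraph.dist_eq_one_iff_adj] at hgh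
  exact hgh.imp_left Eq.symm

theorem IsGeodesicWalk.isGeodesic (hφ : Surjective φ) {g h : G} {p : (cayleyGraph φ).Walk g h}
    (hp : IsGeodesicWalk p) : IsGeodesic φ fun i : Fin (p.length + 1) => p.getVert i := by
  refine ⟨fun i => ?_, ?_⟩
  · rw [← dist_cayleyGraph hφ]
    exact (SimpleGraph.dist_eq_one_iff_adj.2 (p.adj_getVert_succ i.is_lt)).le
  · simp only [Fin.val_zero, Fin.val_last, p.getVert_zero, p.getVert_length]
    rw [← dist_cayleyGraph hφ, hp]

theorem range_getVert {V : Type*} {Γ : SimpleGraph V} {x y : V} (p : Γ.Walk x y) :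
    Set.range (fun i : Fin (p.length + 1) => p.getVert i) = {v | v ∈ p.support} := by
  ext v
  rw [Set.mem_ofPred_eq, SimpleGraph.Walk.mem_support_iff_exists_getVert]
  exact ⟨fun ⟨i, hi⟩ => ⟨i, hi, i.is_le⟩, fun ⟨i, hi, hle⟩ => ⟨⟨i, by omega⟩, hi⟩⟩

theorem IsGeodesic.exists_isGeodesicWalk (hφ : Surjective φ) {n : ℕ} {p : Fin (n + 1) → G}
    (hp : IsGeodesic φ p) {x y : G} (hx : p 0 = x) (hy : p (Fin.last n) = y) :
    ∃ q : (cayleyGraph φ).Walk x y, IsGeodesicWalk q ∧ ∀ v, v ∈ q.support ↔ v ∈ Set.range p := by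
  have hofNat (i : ℕ) (hi : i < n + 1) : Fin.ofNat (n + 1) i = ⟨i, hi⟩ :=
    Fin.ext (Nat.mod_eq_of_lt hi)
  obtain ⟨q, hlen, hq⟩ := exists_walk_of_succ_eq_or_adj (Γ := cayleyGraph φ)
    (y := fun i => p (Fin.ofNat (n + 1) i)) (n := n) fun i hi => by
      rw [hofNat i (by omega), hofNat (i + 1) (by omega)]
      exact eq_or_adj_of_wdist_le_one hφ (hp.1 ⟨i, hi⟩)
  have hstart : p (Fin.ofNat (n + 1) 0) = x := hx
  have hend : p (Fin.ofNat (n + 1) n) = y := (congrArg p (hofNat n n.lt_succ_self)).trans hy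
  have hdist : (cayleyGraph φ).dist x y = n := by rw [dist_cayleyGraph hφ, ← hx, ← hy, hp.2]
  refine ⟨q.copy hstart hend, ?_, fun v => ?_⟩
  · refine le_antisymm ?_ (SimpleGraph.dist_le _)
    rwa [SimpleGraph.Walk.length_copy, hdist]
  · rw [SimpleGraph.Walk.support_copy, hq, Set.mem_range, Fin.exists_iff]
    refine exists_congr fun i =>
      ⟨fun ⟨hi, hv⟩ => ⟨Nat.lt_succ_of_le hi, ?_⟩, fun ⟨hi, hv⟩ => ⟨Nat.le_of_lt_succ hi, ?_⟩⟩
    · rwa [← hofNat]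
    · rwa [hofNat i hi]

theorem HypConst.thinUpTo (hφ : Surjective φ) {δ : ℝ} (h : HypConst φ δ) (N : ℕ) :
    ThinUpTo (cayleyGraph φ) N ⌊δ⌋₊ := by
  intro x y z p q r hp hq hr _ v hv
  have hthin := (h _ _ _ _ _ _ (hp.isGeodesic hφ) (hq.isGeodesic hφ) (hr.isGeodesic hφ)
    (by simp) (by simp) (by simp)).1
  obtain ⟨i, rfl⟩ : v ∈ Set.range fun i : Fin (p.length + 1) => p.getVert i := by
    rwa [range_getVert]
  obtain ⟨w, hw, hvw⟩ := hthin i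
  rw [range_getVert, range_getVert] at hw
  exact ⟨w, hw, (dist_cayleyGraph hφ _ _).trans_le (Nat.le_floor hvw)⟩

theorem thinAt_of_thinUpTo (hφ : Surjective φ) {D : ℕ} (h : ∀ N, ThinUpTo (cayleyGraph φ) N D)
    {n₁ n₂ n₃ : ℕ} {p : Fin (n₁ + 1) → G} {q : Fin (n₂ + 1) → G} {r : Fin (n₃ + 1) → G}
    (hp : IsGeodesic φ p) (hq : IsGeodesic φ q) (hr : IsGeodesic φ r)
    (hpq : p (Fin.last n₁) = q 0) (hqr : q (Fin.last n₂) = r 0) (hrp : r (Fin.last n₃) = p 0) :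
    ThinAt φ D p (Set.range q ∪ Set.range r) := by
  intro i
  obtain ⟨a, ha, hpa⟩ := hp.exists_isGeodesicWalk hφ rfl hpq
  obtain ⟨b, hb, hqb⟩ := hq.exists_isGeodesicWalk hφ rfl hqr
  obtain ⟨c, hc, hrc⟩ := hr.exists_isGeodesicWalk hφ rfl hrp
  obtain ⟨w, hw, hvw⟩ := h _ a b c ha hb hc le_rfl (p i) ((hpa _).2 ⟨i, rfl⟩)
  rw [hqb, hrc] at hw
  exact ⟨w, hw, by exact_mod_cast (dist_cayleyGraph hφ _ _).symm.trans_le hvw⟩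

theorem isHyperbolic_iff (hφ : Surjective φ) :
    IsHyperbolic φ ↔ ∃ D, ∀ N, ThinUpTo (cayleyGraph φ) N D := by
  refine ⟨fun ⟨δ, _, h⟩ => ⟨⌊δ⌋₊, h.thinUpTo hφ⟩, fun ⟨D, h⟩ => ⟨D, D.cast_nonneg, ?_⟩⟩
  intro n₁ n₂ n₃ p q r hp hq hr hpq hqr hrp
  exact ⟨thinAt_of_thinUpTo hφ h hp hq hr hpq hqr hrp,
    thinAt_of_thinUpTo hφ h hq hr hp hqr hrp hpq,
    thinAt_of_thinUpTo hφ h hr hp hq hrp hpq hqr⟩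

end Hyperbolicity

section Area

variable {φ : FreeGroup ι →* G} {R S : Set (FreeGroup ι)} {v w : FreeGroup ι} {k l : ℕ}

theorem areaLe_one_conj {r : FreeGroup ι} (hr : r ∈ R ∨ r⁻¹ ∈ R) (f : FreeGroup ι) :
    AreaLe R (f * r * f⁻¹) 1 :=
  ⟨[(f⁻¹, r)], rfl, by simpa using hr, by simp⟩

theorem AreaLe.mul (hv : AreaLe R v k) (hw : AreaLe R w l) : AreaLe R (v * w) (k + l) := by
  obtain ⟨L, rfl, hL, rfl⟩ := hv
  obtain ⟨M, rfl, hM, rfl⟩ := hw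
  exact ⟨L ++ M, List.length_append, List.forall_mem_append.2 ⟨hL, hM⟩, by simp⟩

theorem AreaLe.mono (h : AreaLe R w l) (hRS : R ⊆ S) : AreaLe S w l := by
  obtain ⟨L, hlen, hL, hw⟩ := h
  exact ⟨L, hlen, fun p hp => (hL p hp).imp (@hRS _) (@hRS _), hw⟩

theorem exists_areaLe (h : w ∈ Subgroup.normalClosure R) : ∃ l, AreaLe R w l := by
  induction h using Subgroup.closure_induction'' with
  | mem x hx =>
    obtain ⟨r, hr, hrx⟩ := Group.mem_conjugatesOfSet_iff.1 hx
    obtain ⟨f, rfl⟩ := isConj_iff.1 hrx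
    exact ⟨1, areaLe_one_conj (Or.inl hr) f⟩
  | inv_mem x hx =>
    obtain ⟨r, hr, hrx⟩ := Group.mem_conjugatesOfSet_iff.1 hx
    obtain ⟨f, rfl⟩ := isConj_iff.1 hrx
    exact ⟨1, conj_inv (a := r) (b := f) ▸ areaLe_one_conj (Or.inr (by rwa [inv_inv])) f⟩
  | one => exact ⟨0, [], rfl, by simp, by simp⟩
  | mul x y _ _ hx hy =>
    obtain ⟨k, hk⟩ := hx
    obtain ⟨l, hl⟩ := hy
    exact ⟨k + l, hk.mul hl⟩

theorem areaLe_area (h : w ∈ Subgroup.normalClosure R) : AreaLe R w (area R w) :=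
  Nat.sInf_mem (s := {l | AreaLe R w l}) (exists_areaLe h)

theorem AreaLe.area_le (h : AreaLe R w l) : area R w ≤ l :=
  Nat.sInf_le h

theorem triv_mono (h : k ≤ l) : triv φ k ⊆ triv φ l :=
  fun _ hw => ⟨hw.1.trans h, hw.2⟩

theorem normalClosure_triv_le_ker (φ : FreeGroup ι →* G) (k : ℕ) :
    Subgroup.normalClosure (triv φ k) ≤ φ.ker :=
  Subgroup.normalClosure_le_normal fun _ hw => hw.2

end Area

section LinearArea

variable {φ : FreeGroup ι →* G} {m : ℕ}

/-- One step of Dehn's algorithm. -/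
theorem exists_triv_mul_wnorm_add_le (hφ : Surjective φ) (h : FourPoint (cayleyGraph φ) m)
    {w : FreeGroup ι} (hw : φ w = 1) (hlong : 16 * m ≤ wnorm w) :
    ∃ f, ∃ r ∈ triv φ (32 * m), ∃ w', w = f * r * f⁻¹ * w' ∧ wnorm w' + m ≤ wnorm w := by
  obtain ⟨L, rfl, hL⟩ := exists_mk_eq_length_eq_wnorm w
  have hloop : wordVertex φ 1 L L.length = wordVertex φ 1 L 0 := by
    rw [wordVertex_length, hw, mul_one, wordVertex_zero]
  obtain ⟨i, j, hij, hj, hij', hshort⟩ := exists_shortcut (cayleyGraph_connected hφ) h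
    (dist_wordVertex_succ_le_one 1 L) hloop (hL ▸ hlong)
  obtain ⟨u, hu, hunorm⟩ :=
    exists_mul_eq_wnorm_eq_wdist hφ (wordVertex φ 1 L i) (wordVertex φ 1 L j)
  set f := FreeGroup.mk (L.take i) with hf
  set t := FreeGroup.mk ((L.take j).drop i)
  have hft : f * t = FreeGroup.mk (L.take j) := by
    conv_rhs => rw [← List.take_append_drop i (L.take j), List.take_take, min_eq_left hij,
      ← FreeGroup.mul_mk]
  have hL' : f * t * FreeGroup.mk (L.drop j) = FreeGroup.mk L := by
    rw [hft, FreeGroup.mul_mk, List.take_append_drop]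
  have htu : φ t = φ u := by
    rwa [wordVertex, wordVertex, one_mul, one_mul, ← hf, ← hft, map_mul, mul_right_inj,
      eq_comm] at hu
  have htnorm : wnorm t ≤ j - i :=
    (wnorm_mk_le _).trans (by simpa using Nat.sub_le_sub_right (min_le_left j L.length) i)
  rw [dist_cayleyGraph hφ, ← hunorm] at hshort
  refine ⟨f, t * u⁻¹, ⟨?_, by rw [map_mul, map_inv, htu, mul_inv_cancel]⟩,
    f * u * FreeGroup.mk (L.drop j), by rw [← hL']; group, ?_⟩
  · have := wnorm_mul_le t u⁻¹
    rw [wnorm_inv] at this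
    omega
  · have hfu := wnorm_mul_le f u
    have hfud := wnorm_mul_le (f * u) (FreeGroup.mk (L.drop j))
    have hfnorm : wnorm f ≤ i := (wnorm_mk_le _).trans (List.length_take_le i L)
    have hd : wnorm (FreeGroup.mk (L.drop j)) ≤ L.length - j :=
      (wnorm_mk_le _).trans List.length_drop.le
    omega

theorem exists_areaLe_mul_le (hφ : Surjective φ) (hm : 0 < m) (h : FourPoint (cayleyGraph φ) m)
    {w : FreeGroup ι} (hw : φ w = 1) :
    ∃ l, AreaLe (triv φ (32 * m)) w l ∧ l * m ≤ wnorm w + m := by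
  induction hn : wnorm w using Nat.strong_induction_on generalizing w with
  | _ n ih =>
    subst hn
    by_cases hlong : 16 * m ≤ wnorm w
    · obtain ⟨f, r, hr, w', rfl, hw'⟩ := exists_triv_mul_wnorm_add_le hφ h hw hlong
      have hφw' : φ w' = 1 := by simpa [hr.2] using hw
      obtain ⟨l, hl, hlm⟩ := ih _ (by omega) hφw' rfl
      exact ⟨1 + l, (areaLe_one_conj (Or.inl hr) f).mul hl, by rw [add_mul]; omega⟩
    · have hw1 : w ∈ triv φ (32 * m) := ⟨by omega, hw⟩
      exact ⟨1, by simpa using areaLe_one_conj (Or.inl hw1) 1, by omega⟩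

theorem isoSpec_le (hφ : Surjective φ) (hm : 0 < m) (h : FourPoint (cayleyGraph φ) m) (k n : ℕ)
    {l : ℕ} (hl : 32 * m ≤ l) : isoSpec φ k l n ≤ (n + m) / m := by
  refine csSup_le ⟨_, 1, ⟨one_mem _, wnorm_one.trans_le n.zero_le⟩, rfl⟩ ?_
  rintro _ ⟨w, ⟨hw, hwn⟩, rfl⟩
  obtain ⟨a, ha, ham⟩ := exists_areaLe_mul_le hφ hm h (normalClosure_triv_le_ker φ k hw)
  exact (ha.mono (triv_mono hl)).area_le.trans
    ((Nat.le_div_iff_mul_le hm).2 (ham.trans (Nat.add_le_add_right hwn m)))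

theorem specLE_linSpec_of_fourPoint (hφ : Surjective φ) {δ : ℕ}
    (h : FourPoint (cayleyGraph φ) δ) : SpecLE (isoSpecR φ) linSpec := by
  refine ⟨δ + 32, by omega, fun k m n hk hm _ hkm => ?_⟩
  have hδm : δ ≤ m := by nlinarith
  have hspec := isoSpec_le hφ hm (h.mono hδm) k n (l := (δ + 32) * m)
    (Nat.mul_le_mul_right _ (by omega))
  have hle : isoSpecR φ k ((δ + 32) * m) n ≤ n / m + 1 := calc
    isoSpecR φ k ((δ + 32) * m) n ≤ ((n + m) / m : ℕ) := Nat.cast_le.2 hspec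
    _ ≤ ((n + m : ℕ) : ℝ) / m := Nat.cast_div_le
    _ = n / m + 1 := by rw [Nat.cast_add, add_div, div_self (Nat.cast_ne_zero.2 hm.ne')]
  have hC : (1 : ℝ) ≤ (δ + 32 : ℕ) := by exact_mod_cast (by omega : 1 ≤ δ + 32)
  have hlin : 0 ≤ ((δ + 32 : ℕ) : ℝ) * linSpec ((δ + 32) * k) m ((δ + 32) * n) := by
    rw [linSpec]; positivity
  have hnm : (n : ℝ) / m ≤ (δ + 32 : ℕ) * n / m := by
    rw [mul_div_assoc]
    exact le_mul_of_one_le_left (by positivity) hC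
  linarith

theorem linSpec_specLE (φ : FreeGroup ι →* G) : SpecLE linSpec (isoSpecR φ) := by
  refine ⟨1, one_pos, fun k m n _ _ _ _ => ?_⟩
  have hspec : 0 ≤ isoSpecR φ (1 * k) m (1 * n) := Nat.cast_nonneg _
  simp only [linSpec, Nat.cast_one, one_mul] at hspec ⊢
  linarith

end LinearArea

section Cochains

/-- Twice the cochain `u dv`: on an edge, `u` is averaged over the endpoints. -/
def uDv {V : Type*} (u v : V → ℤ) (x y : V) : ℤ :=
  (u x + u y) * (v y - v x)

theorem uDv_swap {V : Type*} (u v : V → ℤ) (x y : V) : uDv u v y x = -uDv u v x y := by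
  rw [uDv, uDv]
  ring

theorem sum_uDv_of_left_eq {V : Type*} {u : V → ℤ} (v : V → ℤ) {y : ℕ → V} {n : ℕ} {c : ℤ}
    (hu : ∀ i, u (y i) = c) :
    ∑ i ∈ Finset.range n, uDv u v (y i) (y (i + 1)) = 2 * c * (v (y n) - v (y 0)) := by
  simp only [uDv, hu, ← two_mul]
  rw [← Finset.mul_sum, Finset.sum_range_sub fun i => v (y i)]

theorem sum_uDv_of_right_eq {V : Type*} (u : V → ℤ) {v : V → ℤ} {y : ℕ → V} {n : ℕ} {c : ℤ}
    (hv : ∀ i, v (y i) = c) : ∑ i ∈ Finset.range n, uDv u v (y i) (y (i + 1)) = 0 :=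
  Finset.sum_eq_zero fun i _ => by rw [uDv, hv, hv, sub_self, mul_zero]

theorem abs_sub_le_of_abs_succ_sub_le_one {a : ℕ → ℤ} (ha : ∀ i, |a (i + 1) - a i| ≤ 1) (n : ℕ) :
    |a n - a 0| ≤ n := by
  rw [← Finset.sum_range_sub]
  exact (Finset.abs_sum_le_sum_abs _ _).trans
    ((Finset.sum_le_card_nsmul _ _ _ fun i _ => ha i).trans (by simp))

theorem abs_sum_uDv_le {V : Type*} {u v : V → ℤ} {y : ℕ → V}
    (hu : ∀ i, |u (y (i + 1)) - u (y i)| ≤ 1) (hv : ∀ i, |v (y (i + 1)) - v (y i)| ≤ 1) {n : ℕ}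
    (hloop : y n = y 0) : |∑ i ∈ Finset.range n, uDv u v (y i) (y (i + 1))| ≤ 2 * n ^ 2 := by
  have hbase : ∑ i ∈ Finset.range n, uDv u v (y i) (y (i + 1)) =
      ∑ i ∈ Finset.range n, uDv (fun x => u x - u (y 0)) v (y i) (y (i + 1)) := by
    rw [← sub_eq_zero, ← Finset.sum_sub_distrib]
    calc ∑ i ∈ Finset.range n, (uDv u v (y i) (y (i + 1)) -
          uDv (fun x => u x - u (y 0)) v (y i) (y (i + 1)))
        = ∑ i ∈ Finset.range n, uDv (fun _ => u (y 0)) v (y i) (y (i + 1)) :=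
          Finset.sum_congr rfl fun i _ => by simp only [uDv]; ring
      _ = 0 := by
          rw [sum_uDv_of_left_eq (u := fun _ => u (y 0)) (y := y) v fun _ => rfl, hloop,
            sub_self, mul_zero]
  have hedge : ∀ i ∈ Finset.range n,
      |uDv (fun x => u x - u (y 0)) v (y i) (y (i + 1))| ≤ 2 * n := by
    intro i hi
    have hlt : i + 1 ≤ n := Finset.mem_range.1 hi
    have hui := abs_sub_le_of_abs_succ_sub_le_one (a := fun i => u (y i)) hu i
    have hui' := abs_sub_le_of_abs_succ_sub_le_one (a := fun i => u (y i)) hu (i + 1)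
    rw [uDv, abs_mul, ← mul_one (2 * (n : ℤ))]
    gcongr
    · exact (abs_add_le _ _).trans (by omega)
    · exact hv i
  rw [hbase]
  exact (Finset.abs_sum_le_sum_abs _ _).trans
    ((Finset.sum_le_card_nsmul _ _ _ hedge).trans (by simp; nlinarith))

theorem exists_separating {V : Type*} {Γ : SimpleGraph V} (hΓ : Γ.Connected) {S T : Set V}
    (hS : S.Nonempty) (d : ℕ) (h : ∀ s ∈ S, ∀ t ∈ T, d ≤ Γ.dist s t) :
    ∃ u : V → ℤ, (∀ x y, |u y - u x| ≤ Γ.dist x y) ∧ (∀ s ∈ S, u s = 0) ∧ ∀ t ∈ T, u t = d := by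
  set r : V → ℕ := fun x => sInf ((fun s => Γ.dist s x) '' S)
  have hr_attained (x : V) : ∃ s ∈ S, Γ.dist s x = r x := Nat.sInf_mem (hS.image _)
  have hr_le (x : V) {s : V} (hs : s ∈ S) : r x ≤ Γ.dist s x := Nat.sInf_le ⟨s, hs, rfl⟩
  have hr_lip (x y : V) : r y ≤ r x + Γ.dist x y := by
    obtain ⟨s, hs, hsx⟩ := hr_attained x
    exact hsx ▸ (hr_le y hs).trans hΓ.dist_triangle
  refine ⟨fun x => (min (r x) d : ℕ), fun x y => ?_, fun s hs => ?_, fun t ht => ?_⟩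
  · have hxy := hr_lip x y
    have hyx := hr_lip y x
    rw [Γ.dist_comm] at hyx
    rw [abs_le]
    dsimp only
    omega
  · have hrs : r s = 0 := by simpa using hr_le s hs
    simp [hrs]
  · obtain ⟨s, hs, hst⟩ := hr_attained t
    have := h s hs t ht
    dsimp only
    rw [min_eq_right (by omega)]

end Cochains

section WordIntegrals

variable {φ : FreeGroup ι →* G} {e : G → G → ℤ}

/-- The integral of the cochain `e` along the path labelled by the word `L` in the Cayley graph,
starting at `g`. -/
def wordIntegral (φ : FreeGroup ι →* G) (e : G → G → ℤ) (g : G) (L : List (ι × Bool)) : ℤ :=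
  ∑ i ∈ Finset.range L.length, e (wordVertex φ g L i) (wordVertex φ g L (i + 1))

theorem wordIntegral_append (e : G → G → ℤ) (g : G) (L M : List (ι × Bool)) :
    wordIntegral φ e g (L ++ M) =
      wordIntegral φ e g L + wordIntegral φ e (g * φ (FreeGroup.mk L)) M := by
  rw [wordIntegral, List.length_append, Finset.sum_range_add]
  congr 1
  · refine Finset.sum_congr rfl fun i hi => ?_
    have hlt := Finset.mem_range.1 hi
    rw [wordVertex_append_of_le g M hlt.le, wordVertex_append_of_le g M hlt]
  · simp only [add_assoc, wordVertex_append_length_add, wordIntegral]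

theorem wordIntegral_cons (e : G → G → ℤ) (g : G) (s : ι × Bool) (L : List (ι × Bool)) :
    wordIntegral φ e g (s :: L) = e g (g * φ (FreeGroup.mk [s])) +
      wordIntegral φ e (g * φ (FreeGroup.mk [s])) L := by
  refine (wordIntegral_append e g [s] L).trans (congrArg (· + _) ?_)
  rw [wordIntegral, List.length_singleton, Finset.sum_range_one, wordVertex_zero]
  rfl

theorem wordIntegral_eq_of_step (he : ∀ x y, e y x = -e x y) (g : G) {L M : List (ι × Bool)}
    (h : FreeGroup.Red.Step L M) : wordIntegral φ e g L = wordIntegral φ e g M := by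
  obtain @⟨L, M, x, b⟩ := h
  have hinv : FreeGroup.mk [(x, !b)] = (FreeGroup.mk [(x, b)])⁻¹ := rfl
  rw [wordIntegral_append, wordIntegral_append, wordIntegral_cons, wordIntegral_cons, hinv, map_inv,
    mul_inv_cancel_right, he, neg_add_cancel_left]

/-- The integral of an alternating cochain `e` along any path from `g` labelled by a given element
of the free group. -/
def freeIntegral (φ : FreeGroup ι →* G) (he : ∀ x y, e y x = -e x y) (g : G) :
    FreeGroup ι → ℤ :=
  Quot.lift (wordIntegral φ e g) fun _ _ h => wordIntegral_eq_of_step he g h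

theorem freeIntegral_mk (he : ∀ x y, e y x = -e x y) (g : G) (L : List (ι × Bool)) :
    freeIntegral φ he g (FreeGroup.mk L) = wordIntegral φ e g L :=
  rfl

theorem freeIntegral_one (he : ∀ x y, e y x = -e x y) (g : G) : freeIntegral φ he g 1 = 0 :=
  rfl

theorem freeIntegral_mul (he : ∀ x y, e y x = -e x y) (g : G) (v w : FreeGroup ι) :
    freeIntegral φ he g (v * w) = freeIntegral φ he g v + freeIntegral φ he (g * φ v) w := by
  obtain ⟨L, rfl, -⟩ := exists_mk_eq_length_eq_wnorm v
  obtain ⟨M, rfl, -⟩ := exists_mk_eq_length_eq_wnorm w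
  rw [FreeGroup.mul_mk, freeIntegral_mk, freeIntegral_mk, freeIntegral_mk, wordIntegral_append]

theorem freeIntegral_inv (he : ∀ x y, e y x = -e x y) (g : G) (w : FreeGroup ι) :
    freeIntegral φ he (g * φ w) w⁻¹ = -freeIntegral φ he g w := by
  rw [eq_neg_iff_add_eq_zero, add_comm, ← freeIntegral_mul, mul_inv_cancel, freeIntegral_one]

theorem freeIntegral_conj (he : ∀ x y, e y x = -e x y) (g : G) (f : FreeGroup ι)
    {r : FreeGroup ι} (hr : φ r = 1) :
    freeIntegral φ he g (f⁻¹ * r * f) = freeIntegral φ he (g * φ f⁻¹) r := by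
  have hf := freeIntegral_inv (φ := φ) he g f⁻¹
  rw [inv_inv] at hf
  rw [freeIntegral_mul, freeIntegral_mul, map_mul, hr, mul_one, hf]
  ring

/-- Discrete Stokes: `R` plays the role of the boundaries of the cells. -/
theorem AreaLe.abs_freeIntegral_le {he : ∀ x y, e y x = -e x y} {R : Set (FreeGroup ι)}
    (hR : R ⊆ φ.ker) {B : ℤ} (hB : ∀ r ∈ R, ∀ g, |freeIntegral φ he g r| ≤ B)
    {w : FreeGroup ι} {k : ℕ} (hw : AreaLe R w k) (g : G) : |freeIntegral φ he g w| ≤ k * B := by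
  obtain ⟨L, rfl, hL, rfl⟩ := hw
  induction L with
  | nil => simp [freeIntegral_one]
  | cons p L ih =>
    obtain ⟨hp, hL⟩ := List.forall_mem_cons.1 hL
    have hker : φ p.2 = 1 := hp.elim (@hR _) fun h => by simpa using hR h
    have hcell : |freeIntegral φ he (g * φ p.1⁻¹) p.2| ≤ B := by
      rcases hp with hp | hp
      · exact hB _ hp _
      · have hinv := freeIntegral_inv (φ := φ) he (g * φ p.1⁻¹) p.2
        rw [hker, mul_one] at hinv
        rw [← abs_neg, ← hinv]
        exact hB _ hp _
    have hconj : φ (p.1⁻¹ * p.2 * p.1) = 1 := by simp [hker]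
    rw [List.map_cons, List.prod_cons, freeIntegral_mul, hconj, mul_one,
      freeIntegral_conj he g p.1 hker, List.length_cons, Nat.cast_succ, add_one_mul, add_comm]
    exact (abs_add_le _ _).trans (add_le_add (ih hL) hcell)

theorem abs_freeIntegral_uDv_le {u v : G → ℤ} (hu : ∀ x y, |u y - u x| ≤ (cayleyGraph φ).dist x y)
    (hv : ∀ x y, |v y - v x| ≤ (cayleyGraph φ).dist x y) {l : ℕ} {r : FreeGroup ι}
    (hr : r ∈ triv φ l) (g : G) : |freeIntegral φ (uDv_swap u v) g r| ≤ 2 * l ^ 2 := by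
  obtain ⟨hlen, hker⟩ := hr
  obtain ⟨L, rfl, hL⟩ := exists_mk_eq_length_eq_wnorm r
  have hstep (i : ℕ) : ((cayleyGraph φ).dist (wordVertex φ g L i) (wordVertex φ g L (i + 1)) : ℤ)
      ≤ 1 := by exact_mod_cast dist_wordVertex_succ_le_one g L i
  have hLl : (L.length : ℤ) ≤ l := by exact_mod_cast hL.trans_le hlen
  calc |freeIntegral φ (uDv_swap u v) g (FreeGroup.mk L)|
      ≤ 2 * L.length ^ 2 :=
        abs_sum_uDv_le (fun i => (hu _ _).trans (hstep i)) (fun i => (hv _ _).trans (hstep i))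
          (by rw [wordVertex_length, hker, mul_one, wordVertex_zero])
    _ ≤ 2 * l ^ 2 := by gcongr

end WordIntegrals

section LinearAreaImpliesHyperbolic

variable {φ : FreeGroup ι →* G}

theorem exists_word_of_walk {g h : G} (p : (cayleyGraph φ).Walk g h) :
    ∃ L : List (ι × Bool), L.length = p.length ∧ g * φ (FreeGroup.mk L) = h ∧
      ∀ i, wordVertex φ g L i ∈ p.support := by
  obtain ⟨L, hlen, hL⟩ := exists_wordVertex_eq_getVert p
  exact ⟨L, hlen, by rw [← wordVertex_length, hL, hlen, p.getVert_length],
    fun i => hL i ▸ p.getVert_mem_support i⟩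

theorem wordIntegral_uDv_of_left_eq {u : G → ℤ} (v : G → ℤ) {g h : G} {L : List (ι × Bool)} {c : ℤ}
    (hL : g * φ (FreeGroup.mk L) = h) (hu : ∀ i, u (wordVertex φ g L i) = c) :
    wordIntegral φ (uDv u v) g L = 2 * c * (v h - v g) := by
  rw [wordIntegral, sum_uDv_of_left_eq v hu, wordVertex_length, wordVertex_zero, hL]

/-- Only `p₃` contributes to the boundary integral. -/
theorem exists_wordIntegral_uDv_eq {u v : G → ℤ} {d₁ d₂ : ℤ} {x₁ x₂ x₃ x₄ : G}
    (p₁ : (cayleyGraph φ).Walk x₁ x₂) (p₂ : (cayleyGraph φ).Walk x₂ x₃)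
    (p₃ : (cayleyGraph φ).Walk x₃ x₄) (p₄ : (cayleyGraph φ).Walk x₄ x₁)
    (hu₁ : ∀ g ∈ p₁.support, u g = 0) (hu₃ : ∀ g ∈ p₃.support, u g = d₁)
    (hv₂ : ∀ g ∈ p₂.support, v g = 0) (hv₄ : ∀ g ∈ p₄.support, v g = d₂) :
    ∃ L : List (ι × Bool), L.length = p₁.length + p₂.length + p₃.length + p₄.length ∧
      φ (FreeGroup.mk L) = 1 ∧ wordIntegral φ (uDv u v) x₁ L = 2 * (d₁ * d₂) := by
  obtain ⟨L₁, hlen₁, hL₁, hsupp₁⟩ := exists_word_of_walk p₁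
  obtain ⟨L₂, hlen₂, hL₂, hsupp₂⟩ := exists_word_of_walk p₂
  obtain ⟨L₃, hlen₃, hL₃, hsupp₃⟩ := exists_word_of_walk p₃
  obtain ⟨L₄, hlen₄, hL₄, hsupp₄⟩ := exists_word_of_walk p₄
  refine ⟨L₁ ++ (L₂ ++ (L₃ ++ L₄)), ?_, ?_, ?_⟩
  · simp only [List.length_append, hlen₁, hlen₂, hlen₃, hlen₄, add_assoc]
  · apply mul_left_cancel (a := x₁)
    simp only [← FreeGroup.mul_mk, map_mul, ← mul_assoc, hL₁, hL₂, hL₃, hL₄, mul_one]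
  · have h₁ := wordIntegral_uDv_of_left_eq v hL₁ fun i => hu₁ _ (hsupp₁ i)
    have h₂ : wordIntegral φ (uDv u v) x₂ L₂ = 0 := sum_uDv_of_right_eq u fun i => hv₂ _ (hsupp₂ i)
    have h₃ := wordIntegral_uDv_of_left_eq v hL₃ fun i => hu₃ _ (hsupp₃ i)
    have h₄ : wordIntegral φ (uDv u v) x₄ L₄ = 0 := sum_uDv_of_right_eq u fun i => hv₄ _ (hsupp₄ i)
    rw [hv₂ x₃ p₂.end_mem_support, hv₄ x₄ p₄.start_mem_support] at h₃
    rw [wordIntegral_append, hL₁, wordIntegral_append, hL₂, wordIntegral_append, hL₃, h₁, h₂, h₃,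
      h₄]
    ring

theorem besicovitchBound_cayleyGraph (hφ : Surjective φ) {l K : ℕ}
    (hK : ∀ w, φ w = 1 → ∃ k ≤ K * (wnorm w + 1), AreaLe (triv φ l) w k) :
    BesicovitchBound (cayleyGraph φ) (K * l ^ 2) := by
  intro x₁ x₂ x₃ x₄ p₁ p₂ p₃ p₄ d₁ d₂ hd₁ hd₂
  have hΓ := cayleyGraph_connected hφ
  obtain ⟨u, hu, hu₁, hu₃⟩ := exists_separating hΓ ⟨x₁, p₁.start_mem_support⟩ d₁ hd₁
  obtain ⟨v, hv, hv₂, hv₄⟩ := exists_separating hΓ ⟨x₂, p₂.start_mem_support⟩ d₂ hd₂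
  obtain ⟨L, hlength, hloop, hintegral⟩ := exists_wordIntegral_uDv_eq p₁ p₂ p₃ p₄ hu₁ hu₃ hv₂ hv₄
  obtain ⟨k, hk, harea⟩ := hK _ hloop
  have hstokes := harea.abs_freeIntegral_le (fun _ hr => hr.2)
    (fun _ hr => abs_freeIntegral_uDv_le hu hv hr) x₁
  rw [freeIntegral_mk, hintegral, mul_left_comm, abs_of_nonneg (by positivity)] at hstokes
  calc d₁ * d₂ ≤ k * l ^ 2 := by zify; linarith
    _ ≤ K * (wnorm (FreeGroup.mk L) + 1) * l ^ 2 := by gcongr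
    _ = K * l ^ 2 * (wnorm (FreeGroup.mk L) + 1) := by ring
    _ ≤ _ := by
      gcongr
      exact (wnorm_mk_le L).trans hlength.le

theorem exists_subset_triv {R : Set (FreeGroup ι)} (hR : R.Finite) (hker : R ⊆ φ.ker) :
    ∃ k, 0 < k ∧ R ⊆ triv φ k := by
  obtain ⟨B, hB⟩ := (hR.image wnorm).bddAbove
  exact ⟨B + 1, B.succ_pos, fun r hr => ⟨(hB ⟨r, hr, rfl⟩).trans B.le_succ, hker hr⟩⟩

theorem area_le_isoSpec [Finite ι] {k n : ℕ} (l : ℕ) {w : FreeGroup ι}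
    (hw : w ∈ Subgroup.normalClosure (triv φ k)) (hn : wnorm w ≤ n) :
    area (triv φ l) w ≤ isoSpec φ k l n :=
  le_csSup (((finite_setOf_wnorm_le n).subset fun _ hv => hv.2).image _).bddAbove
    ⟨w, ⟨hw, hn⟩, rfl⟩

theorem SpecLE.exists_isoSpec_le (h : SpecLE (isoSpecR φ) linSpec) {k : ℕ} (hk : 0 < k) :
    ∃ l K, k ≤ l ∧ ∀ n, isoSpec φ k l (n + 1) ≤ K * (n + 1) := by
  obtain ⟨C, hC, hspec⟩ := h
  have hm : 0 < C * k := Nat.mul_pos hC hk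
  have hm1 : (1 : ℝ) ≤ (C * k : ℕ) := Nat.one_le_cast.2 hm
  refine ⟨C * (C * k), C * C + C + C, (Nat.le_mul_of_pos_left k hC).trans
    (Nat.le_mul_of_pos_left _ hC), fun n => ?_⟩
  have hle : (isoSpec φ k (C * (C * k)) (n + 1) : ℝ) ≤ ((C * C + C + C) * (n + 1) : ℕ) := calc
    (isoSpec φ k (C * (C * k)) (n + 1) : ℝ)
        ≤ C * ((C * (n + 1) : ℕ) / (C * k : ℕ)) + C * ((n + 1 : ℕ) : ℝ) / (C * k : ℕ) + C :=
      hspec k (C * k) (n + 1) hk hm n.succ_pos le_rfl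
    _ ≤ C * (C * (n + 1) : ℕ) + C * ((n + 1 : ℕ) : ℝ) + C * (n + 1) := by
      gcongr
      · exact div_le_self (by positivity) hm1
      · exact div_le_self (by positivity) hm1
      · exact le_mul_of_one_le_right (by positivity) (by linarith [n.cast_nonneg (α := ℝ)])
    _ = ((C * C + C + C) * (n + 1) : ℕ) := by push_cast; ring
  exact_mod_cast hle

theorem isHyperbolic_of_specLE [Finite ι] (hφ : Surjective φ)
    (hFP : ∃ R : Set (FreeGroup ι), R.Finite ∧ φ.ker = Subgroup.normalClosure R)
    (h : SpecLE (isoSpecR φ) linSpec) : IsHyperbolic φ := by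
  obtain ⟨R, hR, hker⟩ := hFP
  obtain ⟨k, hk, hRk⟩ := exists_subset_triv hR (hker ▸ Subgroup.subset_normalClosure)
  obtain ⟨l, K, hkl, hK⟩ := h.exists_isoSpec_le hk
  have harea (w : FreeGroup ι) (hw : φ w = 1) :
      ∃ a ≤ K * (wnorm w + 1), AreaLe (triv φ l) w a := by
    have hwR : w ∈ Subgroup.normalClosure R := hker ▸ hw
    have hwk := Subgroup.normalClosure_mono hRk hwR
    exact ⟨_, (area_le_isoSpec l hwk (Nat.le_succ _)).trans (hK _),
      areaLe_area (Subgroup.normalClosure_mono (triv_mono hkl) hwk)⟩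
  exact (isHyperbolic_iff hφ).2 ⟨_, thinUpTo_of_besicovitchBound (cayleyGraph_connected hφ)
    (besicovitchBound_cayleyGraph hφ harea)⟩

end LinearAreaImpliesHyperbolic

theorem hyperbolic_iff_linear_isoSpec_general {ι G : Type*} [Finite ι] [Group G]
    (φ : FreeGroup ι →* G) (hφ : Surjective φ)
    (hFP : ∃ R : Set (FreeGroup ι), R.Finite ∧ φ.ker = Subgroup.normalClosure R) :
    IsHyperbolic φ ↔ SpecEquiv (isoSpecR φ) linSpec := by
  refine ⟨fun h => ?_, fun h => isHyperbolic_of_specLE hφ hFP h.1⟩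
  obtain ⟨D, hthin⟩ := (isHyperbolic_iff hφ).1 h
  have hfour := fourPoint_of_thin (cayleyGraph_connected hφ) hthin
  exact ⟨specLE_linSpec_of_fourPoint hφ hfour, linSpec_specLE φ⟩

/-- A finitely presented group is hyperbolic iff its isoperimetric
spectrum is linear. -/
theorem hyperbolic_iff_linear_isoSpec {G : Type} [Group G] {a : ℕ}
    (φ : FreeGroup (Fin a) →* G) (hφ : Surjective φ)
    (hFP : ∃ R : Set (FreeGroup (Fin a)), R.Finite ∧ φ.ker = Subgroup.normalClosure R) :
    IsHyperbolic φ ↔ SpecEquiv (isoSpecR φ) linSpec :=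
  hyperbolic_iff_linear_isoSpec_general φ hφ hFP

end IsoSpecPaper
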